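/- Let X, Y, K, G, F*, Q, P*, L_Q, L_P be as in the primal–dual setting, and assume a saddle point exists. Suppose τ, σ > 0 satisfy τL_Q < 2, σL_P < 2 and ‖K‖² < (1/τ − L_Q/2)(1/σ − L_P/2). Let (α_k) be a nondecreasing sequence in [0, α] with α < 1, and suppose there exists ε > 0 such that for all k: (1 − 3α_k − ε)/τ ≥ ((1 − α_k)²/2)L_Q, (1 − 3α_k − ε)/σ ≥ ((1 − α_k)²/2)L_P, and ((1 − 3α_k − ε)/τ − ((1 − α_k)²/2)L_Q)·((1 − 3α_k − ε)/σ − ((1 − α_k)²/2)L_P) ≥ (1 − 3α_k − ε)²‖K‖². Then the inertial primal–dual forward–backward iterates (x^k, y^k) converge weakly in X × Y to a saddle point (x*, y*). -/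

import Mathlib

/-!
Write `z = (x, y)` and `w = (ξ, ζ)`. With the preconditioner `M = [[1/τ, -K*], [-K, 1/σ]]`, the
iteration is the forward–backward step `M (w k - z (k + 1)) - C (w k) ∈ A (z (k + 1))`, where
`A = (∂G + K* ·, ∂F* - K ·)` is monotone and `C = (∇Q, ∇P*)` satisfies the three-point inequality
`⟨C w - C z*, z - z*⟩ ≥ -(1/4) ⟨L (z - w), z - w⟩` with `L = diag (LQ, LP)` (`three_point`).
The strict step-size condition makes `M - L / 2` strongly positive (`exists_coercive`).

For a saddle point `p` let `φ k = M(z k - p, z k - p)` and `d k = z k - z (k - 1)`. Expanding the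
variational inequality (`step_VI`) shows that
`μ k = φ k - α_k φ (k - 1) + (2 α_k M - α_k (1 - α_k) L / 2)(d k, d k)` decreases by at least
`ε M(d (k + 1), d (k + 1))` at each step; the ε-conditions say precisely that
`(1 - 3 α_k - ε) M - (1 - α_k)² L / 2` is positive semidefinite. Consequently the iterates are
bounded, `d k → 0`, and `φ k` converges, because `α_k` converges to a limit below `1`
(`inertial_seq`, `inertial_energy`).

Weak cluster points are described by ultrafilters: a bounded sequence has a weak limit along each
one (`exists_weak_limit`). Such a limit is a saddle point (`isSaddle_of_weak`), because convex lower
semicontinuous functions are weakly lower semicontinuous and the optimality conditions can be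
recovered from the limiting saddle inequality. Finally, Opial's argument in the `M`-inner product
shows that all these limits agree, which is weak convergence of the whole sequence.
-/


open scoped RealInnerProductSpace
open Filter Topology

/-- The subdifferential of a convex function. -/
def subdiff {E : Type*} [NormedAddCommGroup E] [InnerProductSpace ℝ E]
    (f : E → ℝ) (x : E) : Set E :=
  {u | ∀ z, f x + ⟪u, z - x⟫ ≤ f z}

/-! ### Convex functions with Lipschitz gradient -/

theorem deriv_nonneg_of_right_min {h : ℝ → ℝ} {h' : ℝ} (hd : HasDerivAt h h' 0)
    (hmin : ∀ t, 0 < t → t < 1 → h 0 ≤ h t) : 0 ≤ h' := by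
  have hs := (hasDerivAt_iff_tendsto_slope_left_right.1 hd).2
  refine ge_of_tendsto hs ?_
  filter_upwards [Ioo_mem_nhdsGT (show (0:ℝ) < 1 by norm_num)] with t ht
  rw [slope_def_field]
  exact div_nonneg (sub_nonneg.2 (hmin t ht.1 ht.2)) (by linarith [ht.1])

theorem hasDerivAt_line {E : Type*} [NormedAddCommGroup E] [InnerProductSpace ℝ E]
    [CompleteSpace E] {f : E → ℝ} {g : E → E} (hg : ∀ x, HasGradientAt f (g x) x)
    (p d : E) (t : ℝ) :
    HasDerivAt (fun s : ℝ => f (p + s • d)) ⟪g (p + t • d), d⟫ t := by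
  have h1 : HasDerivAt (fun s : ℝ => p + s • d) d t := by
    simpa using ((hasDerivAt_id t).smul_const d).const_add p
  exact ((hg (p + t • d)).hasFDerivAt.comp_hasDerivAt t h1).congr_deriv (by simp)

/-- First-order optimality for a sum `f + q` with `q` differentiable, which yields the exact
subgradient `-∇q` of `f`. -/
theorem neg_grad_mem_subdiff_of_min {E : Type*} [NormedAddCommGroup E] [InnerProductSpace ℝ E]
    [CompleteSpace E] {f q : E → ℝ} {g : E → E} (hf : ConvexOn ℝ Set.univ f)
    (hg : ∀ x, HasGradientAt q (g x) x) (p c : E)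
    (hmin : ∀ z, f p + q p ≤ f z + q z + ⟪c, z - p⟫) : -(g p + c) ∈ subdiff f p := by
  intro z
  set d := z - p with hd
  have h1 : HasDerivAt (fun t : ℝ => t * (f z - f p) + q (p + t • d) + t * ⟪c, d⟫)
      ((f z - f p) + ⟪g p, d⟫ + ⟪c, d⟫) 0 := by
    exact ((((hasDerivAt_id (0:ℝ)).mul_const (f z - f p)).add
      (hasDerivAt_line hg p d 0)).add ((hasDerivAt_id (0:ℝ)).mul_const ⟪c, d⟫)).congr_deriv
      (by simp)
  have h2 := deriv_nonneg_of_right_min h1 (by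
    intro t ht0 ht1
    have h3 := hf.2 (Set.mem_univ p) (Set.mem_univ z) (sub_nonneg.2 ht1.le) ht0.le (by ring)
    have h4 : (1 - t) • p + t • z = p + t • d := by rw [hd]; module
    rw [h4] at h3
    have h5 := hmin (p + t • d)
    rw [add_sub_cancel_left, inner_smul_right] at h5
    simp only [smul_eq_mul] at h3
    simp only [zero_mul, zero_smul, add_zero, zero_add]
    linarith)
  rw [inner_neg_left, inner_add_left]
  linarith

theorem gradient_mem_subdiff {E : Type*} [NormedAddCommGroup E] [InnerProductSpace ℝ E]
    [CompleteSpace E] {f : E → ℝ} {g : E → E} (hf : ConvexOn ℝ Set.univ f)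
    (hg : ∀ x, HasGradientAt f (g x) x) (p : E) : g p ∈ subdiff f p := by
  have hg' : ∀ x, HasGradientAt (fun y => - f y) (-g x) x := fun x => by
    rw [hasGradientAt_iff_hasFDerivAt, map_neg]
    exact (hg x).hasFDerivAt.neg
  have := neg_grad_mem_subdiff_of_min hf hg' p 0 (by intro z; simp)
  simpa using this

/-- The descent lemma. -/
theorem descent_lemma {E : Type*} [NormedAddCommGroup E] [InnerProductSpace ℝ E]
    [CompleteSpace E] {f : E → ℝ} {g : E → E} {L : ℝ} (hL : 0 ≤ L)
    (hg : ∀ x, HasGradientAt f (g x) x) (hlip : LipschitzWith (Real.toNNReal L) g) (p d : E) :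
    f (p + d) ≤ f p + ⟪g p, d⟫ + L / 2 * ‖d‖ ^ 2 := by
  have hder : ∀ t : ℝ, HasDerivAt
      (fun s : ℝ => f (p + s • d) - s * ⟪g p, d⟫ - L / 2 * ‖d‖ ^ 2 * s ^ 2)
      (⟪g (p + t • d), d⟫ - ⟪g p, d⟫ - L * ‖d‖ ^ 2 * t) t := by
    intro t
    have h1 := ((hasDerivAt_line hg p d t).sub ((hasDerivAt_id t).mul_const ⟪g p, d⟫)).sub
      ((hasDerivAt_pow 2 t).const_mul (L / 2 * ‖d‖ ^ 2))
    exact h1.congr_deriv (by push_cast; ring)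
  have hanti := antitoneOn_of_deriv_nonpos (convex_Icc (0:ℝ) 1)
    (fun t _ => (hder t).continuousAt.continuousWithinAt)
    (fun t _ => (hder t).differentiableAt.differentiableWithinAt) (by
      intro t ht
      rw [interior_Icc] at ht
      rw [(hder t).deriv, ← inner_sub_left]
      have h1 := real_inner_le_norm (g (p + t • d) - g p) d
      have h2 := hlip.dist_le_mul (p + t • d) p
      rw [dist_eq_norm, dist_eq_norm, add_sub_cancel_left, norm_smul, Real.norm_eq_abs,
        abs_of_pos ht.1, Real.coe_toNNReal L hL] at h2
      nlinarith [mul_le_mul_of_nonneg_right h2 (norm_nonneg d)])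
  have := hanti (Set.left_mem_Icc.2 zero_le_one) (Set.right_mem_Icc.2 zero_le_one) zero_le_one
  simp at this
  linarith

/-- Three-point form of the cocoercivity of `∇f`. It is stated without dividing by `L`, and
it has the sharp constant `L / 4` rather than the `L / 2` which the descent lemma gives directly. -/
theorem three_point {E : Type*} [NormedAddCommGroup E] [InnerProductSpace ℝ E]
    [CompleteSpace E] {f : E → ℝ} {g : E → E} {L : ℝ} (hL : 0 ≤ L)
    (hf : ConvexOn ℝ Set.univ f)
    (hg : ∀ x, HasGradientAt f (g x) x) (hlip : LipschitzWith (Real.toNNReal L) g) (w s v : E) :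
    0 ≤ ⟪g w - g s, v - s⟫ + L / 4 * ‖v - w‖ ^ 2 := by
  -- Compare `f` at the points `w + d` and `s - d`, where `d = (v - w) / 2`, with its affine
  -- minorants at `w` and `s` and with the quadratic majorants of the descent lemma.
  set d : E := (1 / 2 : ℝ) • (v - w) with hd
  have h1 := descent_lemma hL hg hlip w d
  have h2 := descent_lemma hL hg hlip s (-d)
  have h3 := gradient_mem_subdiff hf hg w (s + -d)
  have h4 := gradient_mem_subdiff hf hg s (w + d)
  have e1 : v - s = (w + d) - s + d := by rw [hd]; module
  have e2 : v - s = d - (s + -d - w) := by rw [hd]; module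
  have e3 : ‖d‖ ^ 2 = 1 / 4 * ‖v - w‖ ^ 2 := by
    rw [hd, norm_smul]; norm_num; ring
  rw [norm_neg, inner_neg_right] at h2
  have e4 : ⟪g w, v - s⟫ = ⟪g w, d⟫ - ⟪g w, s + -d - w⟫ := by rw [e2, inner_sub_right]
  have e5 : ⟪g s, v - s⟫ = ⟪g s, (w + d) - s⟫ + ⟪g s, d⟫ := by rw [e1, inner_add_right]
  rw [inner_sub_left, e4, e5]
  rw [e3] at h1 h2
  linarith

/-! ### The inertial energy estimate -/

/-- The Lyapunov argument on real sequences: `μ k = φ k - a k * φ (k - 1) + n k` is nonincreasing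
and bounded below. At `k = 0` the truncated index makes `φ (0 - 1) = φ 0`. -/
theorem inertial_seq {φ m n a : ℕ → ℝ} {α ε : ℝ} (hα0 : 0 ≤ α) (hα1 : α < 1) (hε : 0 < ε)
    (ha : ∀ k, a k ∈ Set.Icc 0 α) (hmono : Monotone a)
    (hφ : ∀ k, 0 ≤ φ k) (hm : ∀ k, 0 ≤ m k) (hn : ∀ k, 0 ≤ n k) (hnm : ∀ k, n k ≤ 2 * m k)
    (hstep : ∀ k, φ (k + 1) - (1 + a k) * φ k + a k * φ (k - 1)
      ≤ n k - n (k + 1) - ε * m (k + 1)) :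
    (∃ B, 0 ≤ B ∧ ∀ k, φ k ≤ B) ∧ Tendsto m atTop (𝓝 0) ∧
      ∃ l, Tendsto (fun k => φ k - a k * φ (k - 1)) atTop (𝓝 l) := by
  set μ : ℕ → ℝ := fun k => φ k - a k * φ (k - 1) + n k with hμ
  have hdec : ∀ k, ε * m (k + 1) ≤ μ k - μ (k + 1) := by
    intro k
    have h1 := hstep k
    have h2 := mul_le_mul_of_nonneg_right (hmono (Nat.le_succ k)) (hφ k)
    simp only [hμ, Nat.add_sub_cancel]
    simp only [Nat.succ_eq_add_one] at h2
    linarith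
  have hanti : Antitone μ := antitone_nat_of_succ_le fun k => by
    have := hdec k
    have := mul_nonneg hε.le (hm (k + 1))
    linarith
  have hα : 0 < 1 - α := by linarith
  obtain ⟨B, hB0, hB1, hB2⟩ : ∃ B, 0 ≤ B ∧ φ 0 ≤ B ∧ α * B + μ 0 ≤ B := by
    refine ⟨max (φ 0) (μ 0 / (1 - α)), le_max_of_le_left (hφ 0), le_max_left _ _, ?_⟩
    have h1 := le_max_right (φ 0) (μ 0 / (1 - α))
    rw [div_le_iff₀ hα] at h1
    linarith
  have hB : ∀ k, φ k ≤ B := by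
    intro k
    induction k with
    | zero => exact hB1
    | succ k ih =>
      have h1 := hanti (Nat.zero_le (k + 1))
      have h2 : a (k + 1) * φ k ≤ α * B :=
        mul_le_mul (ha (k + 1)).2 ih (hφ k) hα0
      have h3 := hn (k + 1)
      simp only [hμ, Nat.add_sub_cancel] at h1 hB2
      linarith
  have hbdd : BddBelow (Set.range μ) := by
    refine ⟨-B, ?_⟩
    rintro _ ⟨k, rfl⟩
    have h2 : a k * φ (k - 1) ≤ 1 * B :=
      mul_le_mul ((ha k).2.trans hα1.le) (hB _) (hφ _) zero_le_one
    simp only [hμ]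
    linarith [hφ k, hn k]
  have hlim := tendsto_atTop_ciInf hanti hbdd
  have hm0 : Tendsto m atTop (𝓝 0) := by
    rw [← tendsto_add_atTop_iff_nat 1]
    have h1 : Tendsto (fun k => (μ k - μ (k + 1)) / ε) atTop (𝓝 0) := by
      have := (hlim.sub ((tendsto_add_atTop_iff_nat 1).2 hlim)).div_const ε
      simpa using this
    refine squeeze_zero (fun k => hm _) (fun k => ?_) h1
    rw [le_div_iff₀ hε]
    linarith [hdec k]
  have hn0 : Tendsto n atTop (𝓝 0) := by
    refine squeeze_zero hn hnm ?_
    simpa using hm0.const_mul 2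
  refine ⟨⟨B, hB0, hB⟩, hm0, ⨅ k, μ k, ?_⟩
  have := hlim.sub hn0
  simp only [sub_zero] at this
  refine this.congr fun k => ?_
  simp only [hμ]; ring

/-- Convergence of the `M`-distances of an inertial sequence to a fixed point `p`, and vanishing
of its increments. `M` plays the role of the preconditioner, and `L` that of the Lipschitz form of
the explicit terms; `hVI` is the variational inequality satisfied by one inertial step. -/
theorem inertial_energy {H : Type*} [AddCommGroup H] [Module ℝ H] (M L : H →ₗ[ℝ] H →ₗ[ℝ] ℝ)
    (hMs : ∀ u v, M u v = M v u) (hLs : ∀ u v, L u v = L v u)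
    (hL : ∀ v, 0 ≤ L v v) (hR : ∀ v, 0 ≤ M v v - L v v / 2)
    {a : ℕ → ℝ} {α ε : ℝ} (hα0 : 0 ≤ α) (hα1 : α < 1) (hε : 0 < ε)
    (ha : ∀ k, a k ∈ Set.Icc 0 α) (hmono : Monotone a)
    (hcond : ∀ k v, 0 ≤ (1 - 3 * a k - ε) * M v v - (1 - a k) ^ 2 / 2 * L v v)
    (z w : ℕ → H) (hw : ∀ k, w k = z k + a k • (z k - z (k - 1))) (p : H)
    (hVI : ∀ k, 0 ≤ M (w k - z (k + 1)) (z (k + 1) - p)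
      + 1 / 4 * L (z (k + 1) - w k) (z (k + 1) - w k)) :
    (∃ B, ∀ k, M (z k - p) (z k - p) ≤ B) ∧
    Tendsto (fun k => M (z k - z (k - 1)) (z k - z (k - 1))) atTop (𝓝 0) ∧
      ∃ l, Tendsto (fun k => M (z k - p) (z k - p)) atTop (𝓝 l) := by
  have hM : ∀ v, 0 ≤ M v v := fun v => by linarith [hL v, hR v]
  set φ : ℕ → ℝ := fun k => M (z k - p) (z k - p) with hφ
  set m : ℕ → ℝ := fun k => M (z k - z (k - 1)) (z k - z (k - 1)) with hm
  set n : ℕ → ℝ := fun k => 2 * a k * M (z k - z (k - 1)) (z k - z (k - 1))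
    - a k * (1 - a k) / 2 * L (z k - z (k - 1)) (z k - z (k - 1)) with hn
  have ha1 : ∀ k, 0 ≤ 1 - a k := fun k => by linarith [(ha k).2]
  have hn0 : ∀ k, 0 ≤ n k := by
    intro k
    have h1 := mul_nonneg (ha k).1 (hR (z k - z (k - 1)))
    have h2 := mul_nonneg (ha k).1 (hM (z k - z (k - 1)))
    have h3 := mul_nonneg (mul_nonneg (ha k).1 (ha k).1) (hL (z k - z (k - 1)))
    simp only [hn]
    nlinarith
  have hnm : ∀ k, n k ≤ 2 * m k := by
    intro k
    have h2 := mul_nonneg (ha1 k) (hM (z k - z (k - 1)))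
    have h3 := mul_nonneg (mul_nonneg (ha k).1 (ha1 k)) (hL (z k - z (k - 1)))
    simp only [hn, hm]
    nlinarith
  have hstep : ∀ k, φ (k + 1) - (1 + a k) * φ k + a k * φ (k - 1)
      ≤ n k - n (k + 1) - ε * m (k + 1) := by
    intro k
    have hV := hVI k
    set d := z k - z (k - 1) with hd
    set d' := z (k + 1) - z k with hd'
    set e := z k - p with he
    have e1 : w k - z (k + 1) = a k • d - d' := by rw [hw, hd']; abel
    have e2 : z (k + 1) - w k = d' - a k • d := by rw [hw, hd']; abel
    have e3 : z (k + 1) - p = d' + e := by rw [hd', he]; abel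
    have e4 : z (k - 1) - p = e - d := by rw [hd, he]; abel
    have h1 := mul_nonneg (ha k).1 (hR (d - d'))
    have h2 := hcond (k + 1) d'
    have h3 := mul_nonneg (sub_nonneg.2 (hmono (Nat.le_succ k))) (hR d')
    simp only [hφ, hm, hn, Nat.add_sub_cancel, ← hd, ← hd', e3, e4, ← he]
    rw [e1, e2, e3] at hV
    simp only [map_sub, map_add, map_smul, LinearMap.sub_apply, LinearMap.add_apply,
      LinearMap.smul_apply, smul_eq_mul, Nat.succ_eq_add_one] at *
    rw [hMs d' d, hLs d' d] at *
    rw [hMs e d, hMs e d']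
    nlinarith
  obtain ⟨⟨B, hB0, hB⟩, hm0, l, hl⟩ :=
    inertial_seq (φ := φ) (m := m) hα0 hα1 hε ha hmono (fun k => hM _) (fun k => hM _) hn0 hnm hstep
  refine ⟨⟨B, hB⟩, hm0, ?_⟩
  -- Consecutive distances differ by `2 M(d, z - p) - M(d, d)`, and this tends to `0` by
  -- Cauchy-Schwarz since `d = z k - z (k - 1)` vanishes and `z - p` is bounded.
  have hdiff : Tendsto (fun k => φ k - φ (k - 1)) atTop (𝓝 0) := by
    have hsq : Tendsto (fun k => (M (z k - z (k - 1)) (z k - p)) ^ 2) atTop (𝓝 0) := by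
      refine squeeze_zero (fun k => sq_nonneg _) (g := fun k => m k * B) (fun k => ?_) ?_
      · have h1 := LinearMap.BilinForm.apply_mul_apply_le_of_forall_zero_le M hM
          (z k - z (k - 1)) (z k - p)
        rw [hMs (z k - p) (z k - z (k - 1)), ← sq] at h1
        exact h1.trans (mul_le_mul_of_nonneg_left (hB k) (hM _))
      · simpa using hm0.mul_const B
    have h0 : Tendsto (fun k => M (z k - z (k - 1)) (z k - p)) atTop (𝓝 0) := by
      have := (Real.continuous_sqrt.tendsto 0).comp hsq
      simp only [Real.sqrt_zero] at this
      rw [tendsto_zero_iff_abs_tendsto_zero]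
      refine this.congr fun k => ?_
      simp [Real.sqrt_sq_eq_abs]
    have h1 : Tendsto (fun k => 2 * M (z k - z (k - 1)) (z k - p) - m k) atTop (𝓝 0) := by
      simpa using (h0.const_mul 2).sub hm0
    refine h1.congr fun k => ?_
    have e4 : z (k - 1) - p = (z k - p) - (z k - z (k - 1)) := by abel
    simp only [hφ, hm, e4]
    generalize z k - p = e
    generalize z k - z (k - 1) = d
    simp only [map_sub, LinearMap.sub_apply]
    rw [hMs e d]
    ring
  have hbdd : BddAbove (Set.range a) := ⟨α, by rintro _ ⟨k, rfl⟩; exact (ha k).2⟩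
  have halim := tendsto_atTop_ciSup hmono hbdd
  set a' := ⨆ k, a k
  have ha' : a' ≤ α := ciSup_le fun k => (ha k).2
  have h1 : Tendsto (fun k => ((φ k - a k * φ (k - 1)) - a k * (φ k - φ (k - 1))) / (1 - a k))
      atTop (𝓝 ((l - a' * 0) / (1 - a'))) :=
    (hl.sub (halim.mul hdiff)).div (tendsto_const_nhds.sub halim) (by linarith)
  refine ⟨_, h1.congr fun k => ?_⟩
  have : 1 - a k ≠ 0 := by linarith [(ha k).2]
  field_simp
  ring

/-! ### Weak limits along ultrafilters -/

/-- A bounded sequence in a Hilbert space has a weak limit along every ultrafilter: take limits of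
the inner products and represent the resulting functional by a vector. -/
theorem exists_weak_limit {E : Type*} [NormedAddCommGroup E] [InnerProductSpace ℝ E]
    [CompleteSpace E] (U : Ultrafilter ℕ) {x : ℕ → E} {C : ℝ} (hx : ∀ k, ‖x k‖ ≤ C) :
    ∃ p : E, ∀ u, Tendsto (fun k => ⟪x k, u⟫) U (𝓝 ⟪p, u⟫) := by
  have hC : ∀ k u, |⟪x k, u⟫| ≤ C * ‖u‖ := fun k u =>
    (abs_real_inner_le_norm _ _).trans (mul_le_mul_of_nonneg_right (hx k) (norm_nonneg u))
  have hex : ∀ u : E, ∃ l : ℝ, |l| ≤ C * ‖u‖ ∧ Tendsto (fun k => ⟪x k, u⟫) U (𝓝 l) := by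
    intro u
    obtain ⟨l, hl, hlim⟩ := (isCompact_Icc (a := -(C * ‖u‖)) (b := C * ‖u‖)).ultrafilter_le_nhds'
      (U.map fun k => ⟪x k, u⟫)
      (Ultrafilter.mem_map.2 (Filter.univ_mem' fun k => abs_le.1 (hC k u)))
    exact ⟨l, abs_le.2 hl, hlim⟩
  choose f hfb hf using hex
  let F : E →ₗ[ℝ] ℝ :=
    { toFun := f
      map_add' := fun u v => tendsto_nhds_unique (hf (u + v)) <| by
        simpa only [inner_add_right] using (hf u).add (hf v)
      map_smul' := fun c u => tendsto_nhds_unique (hf (c • u)) <| by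
        simpa only [inner_smul_right, RingHom.id_apply, smul_eq_mul] using (hf u).const_mul c }
  refine ⟨(InnerProductSpace.toDual ℝ E).symm (F.mkContinuous C hfb), fun u => ?_⟩
  rw [InnerProductSpace.toDual_symm_apply]
  exact hf u

/-- Convex lower semicontinuous functions are weakly lower semicontinuous. -/
theorem eventually_lt_of_weak {E : Type*} [NormedAddCommGroup E] [InnerProductSpace ℝ E]
    [CompleteSpace E] {F : Filter ℕ} {x : ℕ → E} {p : E} {f : E → ℝ}
    (hf : ConvexOn ℝ Set.univ f) (hlsc : LowerSemicontinuous f)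
    (hx : ∀ u, Tendsto (fun k => ⟪x k, u⟫) F (𝓝 ⟪p, u⟫)) {c : ℝ} (hc : c < f p) :
    ∀ᶠ k in F, c < f (x k) := by
  have hconv : Convex ℝ {z | f z ≤ c} := by simpa using hf.convex_le c
  obtain ⟨g, u, hu, hb⟩ := geometric_hahn_banach_point_closed hconv
    (hlsc.isClosed_preimage c) (x := p) (not_le.2 hc)
  have hg : ∀ z, g z = ⟪z, (InnerProductSpace.toDual ℝ E).symm g⟫ := fun z => by
    rw [real_inner_comm, InnerProductSpace.toDual_symm_apply]
  rw [hg] at hu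
  filter_upwards [(hx _).eventually (eventually_lt_nhds hu)] with k hk
  by_contra h
  have := hb (x k) (not_lt.1 h)
  rw [hg] at this
  linarith

theorem inner_tendsto_zero {E : Type*} [NormedAddCommGroup E] [InnerProductSpace ℝ E]
    {F : Filter ℕ} {e g : ℕ → E} {C : ℝ} (he : Tendsto e F (𝓝 0)) (hg : ∀ k, ‖g k‖ ≤ C) :
    Tendsto (fun k => ⟪e k, g k⟫) F (𝓝 0) := by
  refine squeeze_zero_norm (a := fun k => ‖e k‖ * C) (fun k => ?_) ?_
  · exact (norm_inner_le_norm _ _).trans (mul_le_mul_of_nonneg_left (hg k) (norm_nonneg _))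
  · simpa using he.norm.mul_const C

theorem weak_of_sub_tendsto_zero {E : Type*} [NormedAddCommGroup E] [InnerProductSpace ℝ E]
    {F : Filter ℕ} {x x' : ℕ → E} {p : E} (hx : ∀ u, Tendsto (fun k => ⟪x k, u⟫) F (𝓝 ⟪p, u⟫))
    (h : Tendsto (fun k => x' k - x k) F (𝓝 0)) (u : E) :
    Tendsto (fun k => ⟪x' k, u⟫) F (𝓝 ⟪p, u⟫) := by
  have h1 := (hx u).add (inner_tendsto_zero (g := fun _ => u) h fun _ => le_rfl)
  simpa [inner_sub_left] using h1

/-! ### The primal–dual operator -/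

section PrimalDual

variable {X Y : Type*} [NormedAddCommGroup X] [InnerProductSpace ℝ X]
  [NormedAddCommGroup Y] [InnerProductSpace ℝ Y]

/-- The preconditioner `M = [[1/τ, -K*], [-K, 1/σ]]` on `X × Y`, as a bilinear form. -/
noncomputable def precond (K : X →L[ℝ] Y) (τ σ : ℝ) : (X × Y) →ₗ[ℝ] (X × Y) →ₗ[ℝ] ℝ :=
  LinearMap.mk₂ ℝ
    (fun a b => 1 / τ * ⟪a.1, b.1⟫ - ⟪K a.1, b.2⟫ - ⟪K b.1, a.2⟫ + 1 / σ * ⟪a.2, b.2⟫)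
    (by intros; simp [inner_add_left, inner_add_right]; ring)
    (by intros; simp [inner_smul_left, inner_smul_right]; ring)
    (by intros; simp [inner_add_left, inner_add_right]; ring)
    (by intros; simp [inner_smul_left, inner_smul_right]; ring)

theorem precond_apply (K : X →L[ℝ] Y) (τ σ : ℝ) (a b : X × Y) : precond K τ σ a b =
    1 / τ * ⟪a.1, b.1⟫ - ⟪K a.1, b.2⟫ - ⟪K b.1, a.2⟫ + 1 / σ * ⟪a.2, b.2⟫ := rfl

/-- The bilinear form `diag (LQ, LP)` on `X × Y`. -/
noncomputable def lipForm (X Y : Type*) [NormedAddCommGroup X] [InnerProductSpace ℝ X]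
    [NormedAddCommGroup Y] [InnerProductSpace ℝ Y] (LQ LP : ℝ) :
    (X × Y) →ₗ[ℝ] (X × Y) →ₗ[ℝ] ℝ :=
  LinearMap.mk₂ ℝ (fun a b => LQ * ⟪a.1, b.1⟫ + LP * ⟪a.2, b.2⟫)
    (by intros; simp [inner_add_left]; ring)
    (by intros; simp [inner_smul_left]; ring)
    (by intros; simp [inner_add_right]; ring)
    (by intros; simp [inner_smul_right]; ring)

theorem lipForm_apply (LQ LP : ℝ) (a b : X × Y) : lipForm X Y LQ LP a b =
    LQ * ⟪a.1, b.1⟫ + LP * ⟪a.2, b.2⟫ := rfl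

theorem precond_symm (K : X →L[ℝ] Y) (τ σ : ℝ) (a b : X × Y) :
    precond K τ σ a b = precond K τ σ b a := by
  rw [precond_apply, precond_apply, real_inner_comm a.1 b.1, real_inner_comm a.2 b.2]
  ring

theorem lipForm_symm (LQ LP : ℝ) (a b : X × Y) :
    lipForm X Y LQ LP a b = lipForm X Y LQ LP b a := by
  rw [lipForm_apply, lipForm_apply, real_inner_comm a.1, real_inner_comm a.2]

/-- A `2 × 2` block form is nonnegative when its determinant condition holds. -/
theorem block_nonneg (K : X →L[ℝ] Y) {A B s : ℝ} (hA : 0 ≤ A) (hB : 0 ≤ B)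
    (hdet : s ^ 2 * ‖K‖ ^ 2 ≤ A * B) (a : X) (b : Y) :
    0 ≤ A * ‖a‖ ^ 2 + B * ‖b‖ ^ 2 - 2 * s * ⟪K a, b⟫ := by
  have h1 : |⟪K a, b⟫| ≤ ‖K‖ * ‖a‖ * ‖b‖ := (abs_real_inner_le_norm _ _).trans
    (mul_le_mul_of_nonneg_right (K.le_opNorm a) (norm_nonneg b))
  have h2 : ⟪K a, b⟫ ^ 2 ≤ (‖K‖ * ‖a‖ * ‖b‖) ^ 2 := by
    rw [← sq_abs]; exact pow_le_pow_left₀ (abs_nonneg _) h1 2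
  have h3 : (s * ⟪K a, b⟫) ^ 2 ≤ (A * ‖a‖ ^ 2) * (B * ‖b‖ ^ 2) := by
    calc (s * ⟪K a, b⟫) ^ 2 = s ^ 2 * ⟪K a, b⟫ ^ 2 := by ring
      _ ≤ s ^ 2 * (‖K‖ * ‖a‖ * ‖b‖) ^ 2 := by gcongr
      _ = (s ^ 2 * ‖K‖ ^ 2) * (‖a‖ ^ 2 * ‖b‖ ^ 2) := by ring
      _ ≤ (A * B) * (‖a‖ ^ 2 * ‖b‖ ^ 2) := by gcongr
      _ = _ := by ring
  have h4 : |2 * (s * ⟪K a, b⟫)| ≤ A * ‖a‖ ^ 2 + B * ‖b‖ ^ 2 := by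
    apply abs_le_of_sq_le_sq _ (by positivity)
    nlinarith [sq_nonneg (A * ‖a‖ ^ 2 - B * ‖b‖ ^ 2)]
  linarith [le_abs_self (2 * (s * ⟪K a, b⟫))]

theorem precond_self (K : X →L[ℝ] Y) (τ σ : ℝ) (v : X × Y) : precond K τ σ v v =
    1 / τ * ‖v.1‖ ^ 2 - 2 * ⟪K v.1, v.2⟫ + 1 / σ * ‖v.2‖ ^ 2 := by
  rw [precond_apply, real_inner_self_eq_norm_sq, real_inner_self_eq_norm_sq]; ring

theorem lipForm_self (LQ LP : ℝ) (v : X × Y) : lipForm X Y LQ LP v v =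
    LQ * ‖v.1‖ ^ 2 + LP * ‖v.2‖ ^ 2 := by
  rw [lipForm_apply, real_inner_self_eq_norm_sq, real_inner_self_eq_norm_sq]

/-- The strict step-size condition makes `M - L / 2` strongly positive. -/
theorem exists_coercive (K : X →L[ℝ] Y) {τ σ LQ LP : ℝ} (hτ : 0 < τ) (hσ : 0 < σ)
    (hτLQ : τ * LQ < 2) (hσLP : σ * LP < 2)
    (hK : ‖K‖ ^ 2 < (1 / τ - LQ / 2) * (1 / σ - LP / 2)) :
    ∃ c > 0, ∀ v : X × Y, c * (‖v.1‖ ^ 2 + ‖v.2‖ ^ 2) ≤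
      precond K τ σ v v - lipForm X Y LQ LP v v / 2 := by
  have hA : 0 < 1 / τ - LQ / 2 := by
    rw [sub_pos, div_lt_div_iff₀ two_pos hτ]; linarith
  have hB : 0 < 1 / σ - LP / 2 := by
    rw [sub_pos, div_lt_div_iff₀ two_pos hσ]; linarith
  set A := 1 / τ - LQ / 2 with hAd
  set B := 1 / σ - LP / 2 with hBd
  -- With this `c`, `(A - c) * (B - c) = ‖K‖ ^ 2 + c ^ 2`.
  set c := (A * B - ‖K‖ ^ 2) / (A + B) with hc
  have hAB : 0 < A + B := by linarith
  have hcm : c * (A + B) = A * B - ‖K‖ ^ 2 := div_mul_cancel₀ _ hAB.ne'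
  have hc0 : 0 < c := div_pos (by linarith) hAB
  have hcA : c ≤ A := by
    rw [hc, div_le_iff₀ hAB]; nlinarith [sq_nonneg ‖K‖]
  have hcB : c ≤ B := by
    rw [hc, div_le_iff₀ hAB]; nlinarith [sq_nonneg ‖K‖]
  refine ⟨c, hc0, fun v => ?_⟩
  have h := block_nonneg K (A := A - c) (B := B - c) (s := 1) (by linarith) (by linarith)
    (by nlinarith [sq_nonneg c]) v.1 v.2
  rw [precond_self, lipForm_self]
  simp only [hAd, hBd] at h
  linarith

variable [CompleteSpace X] [CompleteSpace Y]

/-- `z = (x, y)` is a saddle point, with `gQ` and `gP` standing for `∇Q` and `∇P*`. -/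
def IsSaddle (K : X →L[ℝ] Y) (G : X → ℝ) (Fs : Y → ℝ) (gQ : X → X) (gP : Y → Y)
    (z : X × Y) : Prop :=
  -(gQ z.1 + (ContinuousLinearMap.adjoint K) z.2) ∈ subdiff G z.1 ∧
    K z.1 - gP z.2 ∈ subdiff Fs z.2

/-- The variational inequality satisfied by one primal–dual step from `w = (a, c)` to `(b, d)`
relative to a saddle point: monotonicity of the subdifferentials, plus the three-point inequality
for the gradients. -/
theorem step_VI {K : X →L[ℝ] Y} {G Q : X → ℝ} {Fs Ps : Y → ℝ}
    {gQ : X → X} {gP : Y → Y} {LQ LP : ℝ}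
    (hQ : ConvexOn ℝ Set.univ Q) (hPs : ConvexOn ℝ Set.univ Ps)
    (hgQ : ∀ x, HasGradientAt Q (gQ x) x) (hgP : ∀ y, HasGradientAt Ps (gP y) y)
    (hLQ : 0 ≤ LQ) (hLP : 0 ≤ LP)
    (hQlip : LipschitzWith (Real.toNNReal LQ) gQ)
    (hPlip : LipschitzWith (Real.toNNReal LP) gP) {τ σ : ℝ} {z : X × Y}
    (hz : IsSaddle K G Fs gQ gP z) (a b : X) (c d : Y)
    (h1 : (1/τ) • (a - b) - gQ a - (ContinuousLinearMap.adjoint K) c ∈ subdiff G b)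
    (h2 : (1/σ) • (c - d) - gP c + K ((2:ℝ) • b - a) ∈ subdiff Fs d) :
    0 ≤ precond K τ σ ((a, c) - (b, d)) ((b, d) - z)
      + 1 / 4 * lipForm X Y LQ LP ((b, d) - (a, c)) ((b, d) - (a, c)) := by
  obtain ⟨p, q⟩ := z
  have e1 := h1 p
  have e2 := h2 q
  have e3 := hz.1 b
  have e4 := hz.2 d
  have e5 := three_point hLQ hQ hgQ hQlip a p b
  have e6 := three_point hLP hPs hgP hPlip c q d
  rw [precond_apply, lipForm_self]
  simp only [Prod.mk_sub_mk, map_sub, map_smul, inner_sub_left, inner_sub_right, inner_add_left,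
    inner_neg_left, inner_smul_left, ContinuousLinearMap.adjoint_inner_left,
    conj_trivial] at *
  linarith [real_inner_comm c (K p), real_inner_comm c (K b), real_inner_comm q (K p),
    real_inner_comm q (K b), real_inner_comm d (K p), real_inner_comm d (K b)]

/-- Weak limits of primal–dual steps of vanishing length are saddle points. Adding the two
subgradient inequalities leaves only weakly lower semicontinuous functions, bilinear terms
that are weakly continuous by skew-symmetry, and terms tending to zero. -/
theorem isSaddle_of_weak {K : X →L[ℝ] Y} {G Q : X → ℝ} {Fs Ps : Y → ℝ}
    {gQ : X → X} {gP : Y → Y} {LQ LP : ℝ}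
    (hG : ConvexOn ℝ Set.univ G) (hGlsc : LowerSemicontinuous G)
    (hFs : ConvexOn ℝ Set.univ Fs) (hFslsc : LowerSemicontinuous Fs)
    (hQ : ConvexOn ℝ Set.univ Q) (hPs : ConvexOn ℝ Set.univ Ps)
    (hgQ : ∀ x, HasGradientAt Q (gQ x) x) (hgP : ∀ y, HasGradientAt Ps (gP y) y)
    (hQlip : LipschitzWith (Real.toNNReal LQ) gQ)
    (hPlip : LipschitzWith (Real.toNNReal LP) gP) {τ σ : ℝ}
    {F : Filter ℕ} [F.NeBot] {a b : ℕ → X} {c d : ℕ → Y} {p : X} {q : Y} {C : ℝ}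
    (h1 : ∀ k, (1/τ) • (a k - b k) - gQ (a k) - (ContinuousLinearMap.adjoint K) (c k)
      ∈ subdiff G (b k))
    (h2 : ∀ k, (1/σ) • (c k - d k) - gP (c k) + K ((2:ℝ) • b k - a k) ∈ subdiff Fs (d k))
    (hbC : ∀ k, ‖b k‖ ≤ C) (hdC : ∀ k, ‖d k‖ ≤ C)
    (haC : ∀ k, ‖a k‖ ≤ C) (hcC : ∀ k, ‖c k‖ ≤ C)
    (hab : Tendsto (fun k => a k - b k) F (𝓝 0)) (hcd : Tendsto (fun k => c k - d k) F (𝓝 0))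
    (hb : ∀ u, Tendsto (fun k => ⟪b k, u⟫) F (𝓝 ⟪p, u⟫))
    (hd : ∀ u, Tendsto (fun k => ⟪d k, u⟫) F (𝓝 ⟪q, u⟫)) :
    IsSaddle K G Fs gQ gP (p, q) := by
  have ha := weak_of_sub_tendsto_zero hb hab
  have hc := weak_of_sub_tendsto_zero hd hcd
  have hQlsc : LowerSemicontinuous Q :=
    (continuous_iff_continuousAt.2 fun x => (hgQ x).continuousAt).lowerSemicontinuous
  have hPlsc : LowerSemicontinuous Ps :=
    (continuous_iff_continuousAt.2 fun x => (hgP x).continuousAt).lowerSemicontinuous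
  have hgQC : ∀ k, ‖gQ (a k)‖ ≤ ‖gQ 0‖ + Real.toNNReal LQ * C := fun k => by
    have h := hQlip.dist_le_mul (a k) 0
    rw [dist_eq_norm, dist_zero_right] at h
    have := norm_le_norm_add_norm_sub' (gQ (a k)) (gQ 0)
    have := mul_le_mul_of_nonneg_left (haC k) (NNReal.coe_nonneg (Real.toNNReal LQ))
    linarith
  have hgPC : ∀ k, ‖gP (c k)‖ ≤ ‖gP 0‖ + Real.toNNReal LP * C := fun k => by
    have h := hPlip.dist_le_mul (c k) 0
    rw [dist_eq_norm, dist_zero_right] at h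
    have := norm_le_norm_add_norm_sub' (gP (c k)) (gP 0)
    have := mul_le_mul_of_nonneg_left (hcC k) (NNReal.coe_nonneg (Real.toNNReal LP))
    linarith
  have hKbC : ∀ k, ‖K (b k)‖ ≤ ‖K‖ * C := fun k =>
    (K.le_opNorm _).trans (mul_le_mul_of_nonneg_left (hbC k) (norm_nonneg _))
  have hKab : Tendsto (fun k => K (a k - b k)) F (𝓝 0) := by
    have h := (K.continuous.tendsto 0).comp hab
    rwa [map_zero] at h
  have key : ∀ u v, G p + Q p + Fs q + Ps q - ⟪K u, q⟫ + ⟪K p, v⟫ ≤ G u + Q u + Fs v + Ps v := by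
    intro u v
    have hT : Tendsto (fun k => 1 / τ * ⟪a k - b k, u - b k⟫ - ⟪a k - b k, gQ (a k)⟫
        + 1 / σ * ⟪c k - d k, v - d k⟫ - ⟪c k - d k, gP (c k)⟫ + ⟪c k - d k, K (b k)⟫
        + ⟪K (a k - b k), d k⟫ - ⟪c k, K u⟫
        + (2 * ⟪b k, (ContinuousLinearMap.adjoint K) v⟫
          - ⟪a k, (ContinuousLinearMap.adjoint K) v⟫)) F
        (𝓝 (1 / τ * 0 - 0 + 1 / σ * 0 - 0 + 0 + 0 - ⟪q, K u⟫
          + (2 * ⟪p, (ContinuousLinearMap.adjoint K) v⟫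
            - ⟪p, (ContinuousLinearMap.adjoint K) v⟫))) := by
      have hu : ∀ k, ‖u - b k‖ ≤ ‖u‖ + C := fun k =>
        (norm_sub_le _ _).trans (by linarith [hbC k])
      have hv : ∀ k, ‖v - d k‖ ≤ ‖v‖ + C := fun k =>
        (norm_sub_le _ _).trans (by linarith [hdC k])
      exact (((((((((inner_tendsto_zero hab hu).const_mul _).sub
        (inner_tendsto_zero hab hgQC)).add ((inner_tendsto_zero hcd hv).const_mul _)).sub
        (inner_tendsto_zero hcd hgPC)).add (inner_tendsto_zero hcd hKbC)).add
        (inner_tendsto_zero hKab hdC)).sub (hc _)).add (((hb _).const_mul 2).sub (ha _)))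
    set T : ℝ := 1 / τ * 0 - 0 + 1 / σ * 0 - 0 + 0 + 0 - ⟪q, K u⟫
          + (2 * ⟪p, (ContinuousLinearMap.adjoint K) v⟫
            - ⟪p, (ContinuousLinearMap.adjoint K) v⟫) with hTd
    have hTe : T = - ⟪K u, q⟫ + ⟪K p, v⟫ := by
      rw [hTd, ContinuousLinearMap.adjoint_inner_right, real_inner_comm q]; ring
    by_contra hcon
    push Not at hcon
    set δ := (G p + Q p + Fs q + Ps q - ⟪K u, q⟫ + ⟪K p, v⟫ - (G u + Q u + Fs v + Ps v)) / 5
      with hδ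
    have hδ0 : 0 < δ := by rw [hδ]; linarith
    obtain ⟨k, k1, k2, k3, k4, k5⟩ := ((eventually_lt_of_weak hG hGlsc hb
      (show G p - δ < G p by linarith)).and ((eventually_lt_of_weak hQ hQlsc ha
      (show Q p - δ < Q p by linarith)).and ((eventually_lt_of_weak hFs hFslsc hd
      (show Fs q - δ < Fs q by linarith)).and ((eventually_lt_of_weak hPs hPlsc hc
      (show Ps q - δ < Ps q by linarith)).and (hT.eventually
      (eventually_gt_nhds (show T - δ < T by linarith))))))).exists
    have e1 := h1 k u
    have e2 := h2 k v
    have e3 := gradient_mem_subdiff hQ hgQ (a k) u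
    have e4 := gradient_mem_subdiff hPs hgP (c k) v
    simp only [map_sub, map_smul, inner_sub_left, inner_sub_right, inner_add_left,
      inner_smul_left, ContinuousLinearMap.adjoint_inner_left,
      ContinuousLinearMap.adjoint_inner_right, conj_trivial] at e1 e2 e3 e4 k5
    rw [real_inner_comm (K (b k)) (d k), real_inner_comm (gQ (a k)) (a k),
      real_inner_comm (gQ (a k)) (b k), real_inner_comm (gP (c k)) (c k),
      real_inner_comm (gP (c k)) (d k)] at k5
    linarith
  constructor
  · refine neg_grad_mem_subdiff_of_min hG hgQ p _ fun u => ?_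
    have := key u q
    rw [ContinuousLinearMap.adjoint_inner_left, map_sub, inner_sub_right,
      real_inner_comm (K u), real_inner_comm (K p)]
    linarith
  · have := neg_grad_mem_subdiff_of_min hFs hgP q (-(K p)) fun v => by
      have := key p v
      rw [inner_neg_left, inner_sub_right]
      linarith
    rwa [show K p - gP q = -(gP q + -(K p)) by abel]

end PrimalDual

/-- `M(·, e)` is weakly continuous. -/
theorem precond_weak {X Y : Type*} [NormedAddCommGroup X] [InnerProductSpace ℝ X]
    [CompleteSpace X] [NormedAddCommGroup Y] [InnerProductSpace ℝ Y] [CompleteSpace Y]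
    (K : X →L[ℝ] Y) (τ σ : ℝ) {F : Filter ℕ} {x : ℕ → X} {y : ℕ → Y} {P : X × Y}
    (hx : ∀ u, Tendsto (fun k => ⟪x k, u⟫) F (𝓝 ⟪P.1, u⟫))
    (hy : ∀ v, Tendsto (fun k => ⟪y k, v⟫) F (𝓝 ⟪P.2, v⟫)) (e : X × Y) :
    Tendsto (fun k => precond K τ σ (x k, y k) e) F (𝓝 (precond K τ σ P e)) := by
  have h := ((((hx e.1).const_mul (1 / τ)).sub (hx ((ContinuousLinearMap.adjoint K) e.2))).sub
    (hy (K e.1))).add ((hy e.2).const_mul (1 / σ))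
  simpa only [precond_apply, ContinuousLinearMap.adjoint_inner_right,
    real_inner_comm (K e.1)] using h

/-! ### Norm estimates for inertial sequences -/

section Norms

variable {E : Type*} [NormedAddCommGroup E] {c : ℝ}

theorem tendsto_zero_of_mul_sq_le {e : ℕ → E} {m : ℕ → ℝ} (hc : 0 < c)
    (hm : Tendsto m atTop (𝓝 0)) (h : ∀ k, c * ‖e k‖ ^ 2 ≤ m k) : Tendsto e atTop (𝓝 0) := by
  refine squeeze_zero_norm (a := fun k => √(m k / c)) (fun k => ?_) ?_
  · refine Real.le_sqrt_of_sq_le ?_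
    rw [le_div_iff₀ hc, mul_comm]
    exact h k
  · have h0 := (Real.continuous_sqrt.tendsto _).comp (hm.div_const c)
    rwa [zero_div, Real.sqrt_zero] at h0

theorem bounded_of_mul_sq_le {x : ℕ → E} {p : E} {B : ℝ} (hc : 0 < c)
    (h : ∀ k, c * ‖x k - p‖ ^ 2 ≤ B) : ∃ C, ∀ k, ‖x k‖ ≤ C := by
  refine ⟨‖p‖ + √(B / c), fun k => (norm_le_norm_add_norm_sub' (x k) p).trans ?_⟩
  gcongr
  refine Real.le_sqrt_of_sq_le ?_
  rw [le_div_iff₀ hc, mul_comm]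
  exact h k

variable [NormedSpace ℝ E] {a : ℕ → ℝ} {x w : ℕ → E}

theorem inertial_sub_tendsto (ha : ∀ k, a k ∈ Set.Icc (0 : ℝ) 1)
    (hw : ∀ k, w k = x k + a k • (x k - x (k - 1)))
    (hd : Tendsto (fun k => x k - x (k - 1)) atTop (𝓝 0)) :
    Tendsto (fun k => w k - x k) atTop (𝓝 0) := by
  refine squeeze_zero_norm (fun k => ?_) (tendsto_zero_iff_norm_tendsto_zero.1 hd)
  rw [hw, add_sub_cancel_left, norm_smul, Real.norm_eq_abs, abs_of_nonneg (ha k).1]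
  exact mul_le_of_le_one_left (norm_nonneg _) (ha k).2

theorem inertial_norm_le {C : ℝ} (ha : ∀ k, a k ∈ Set.Icc (0 : ℝ) 1)
    (hw : ∀ k, w k = x k + a k • (x k - x (k - 1))) (hx : ∀ k, ‖x k‖ ≤ C) (k : ℕ) :
    ‖w k‖ ≤ 3 * C := by
  have h1 : ‖a k • (x k - x (k - 1))‖ ≤ ‖x k - x (k - 1)‖ := by
    rw [norm_smul, Real.norm_eq_abs, abs_of_nonneg (ha k).1]
    exact mul_le_of_le_one_left (norm_nonneg _) (ha k).2
  have h2 := norm_sub_le (x k) (x (k - 1))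
  have h3 := norm_add_le (x k) (a k • (x k - x (k - 1)))
  rw [hw]
  linarith [hx k, hx (k - 1)]

end Norms

/-! ### Weak convergence of the iterates -/

/-- weak convergence of the inertial primal–dual forward–backward algorithm
for a nondecreasing sequence `(α_k)` under the explicit ε-conditions on `τ, σ, α_k`.
The convention `(x⁻¹, y⁻¹) = (x⁰, y⁰)` is encoded via truncated subtraction. -/
theorem stmt8
    {X Y : Type*} [NormedAddCommGroup X] [InnerProductSpace ℝ X] [CompleteSpace X]
    [NormedAddCommGroup Y] [InnerProductSpace ℝ Y] [CompleteSpace Y]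
    (K : X →L[ℝ] Y) (G Q : X → ℝ) (Fs Ps : Y → ℝ)
    (gQ : X → X) (gP : Y → Y) (LQ LP : ℝ)
    (hG : ConvexOn ℝ Set.univ G) (hGlsc : LowerSemicontinuous G)
    (hFs : ConvexOn ℝ Set.univ Fs) (hFslsc : LowerSemicontinuous Fs)
    (hQ : ConvexOn ℝ Set.univ Q) (hPs : ConvexOn ℝ Set.univ Ps)
    (hgQ : ∀ x, HasGradientAt Q (gQ x) x) (hgP : ∀ y, HasGradientAt Ps (gP y) y)
    (hLQ : 0 ≤ LQ) (hLP : 0 ≤ LP)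
    (hQlip : LipschitzWith (Real.toNNReal LQ) gQ)
    (hPlip : LipschitzWith (Real.toNNReal LP) gP)
    -- a saddle point exists
    (hsaddle : ∃ (xs : X) (ys : Y),
      -(gQ xs + (ContinuousLinearMap.adjoint K) ys) ∈ subdiff G xs ∧
      K xs - gP ys ∈ subdiff Fs ys)
    (τ σ : ℝ) (hτ : 0 < τ) (hσ : 0 < σ)
    (hτLQ : τ * LQ < 2) (hσLP : σ * LP < 2)
    (hK : ‖K‖^2 < (1/τ - LQ/2) * (1/σ - LP/2))
    -- (α_k) nondecreasing in [0, α] with α < 1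
    (α : ℝ) (hα0 : 0 ≤ α) (hα1 : α < 1)
    (αk : ℕ → ℝ) (hαk : ∀ k, αk k ∈ Set.Icc 0 α) (hαmono : Monotone αk)
    -- the ε-conditions
    (hε : ∃ ε > 0, ∀ k : ℕ,
      (1 - 3 * αk k - ε) / τ ≥ (1 - αk k)^2 / 2 * LQ ∧
      (1 - 3 * αk k - ε) / σ ≥ (1 - αk k)^2 / 2 * LP ∧
      ((1 - 3 * αk k - ε) / τ - (1 - αk k)^2 / 2 * LQ)
          * ((1 - 3 * αk k - ε) / σ - (1 - αk k)^2 / 2 * LP)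
        ≥ (1 - 3 * αk k - ε)^2 * ‖K‖^2)
    -- inertial primal–dual forward–backward iterates
    (x ξ : ℕ → X) (y ζ : ℕ → Y)
    (hξ : ∀ k, ξ k = x k + αk k • (x k - x (k - 1)))
    (hζ : ∀ k, ζ k = y k + αk k • (y k - y (k - 1)))
    (hxstep : ∀ k, (1/τ) • (ξ k - x (k + 1)) - gQ (ξ k)
        - (ContinuousLinearMap.adjoint K) (ζ k) ∈ subdiff G (x (k + 1)))
    (hystep : ∀ k, (1/σ) • (ζ k - y (k + 1)) - gP (ζ k)
        + K ((2:ℝ) • x (k + 1) - ξ k) ∈ subdiff Fs (y (k + 1))) :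
    ∃ (xs : X) (ys : Y),
      (-(gQ xs + (ContinuousLinearMap.adjoint K) ys) ∈ subdiff G xs ∧
        K xs - gP ys ∈ subdiff Fs ys) ∧
      (∀ u : X, Tendsto (fun k => ⟪x k, u⟫) atTop (𝓝 ⟪xs, u⟫)) ∧
      (∀ v : Y, Tendsto (fun k => ⟪y k, v⟫) atTop (𝓝 ⟪ys, v⟫)) := by
  obtain ⟨ε, hε0, hε⟩ := hε
  obtain ⟨c, hc0, hc⟩ := exists_coercive K hτ hσ hτLQ hσLP hK
  set M := precond K τ σ with hMdef
  set L := lipForm X Y LQ LP with hLdef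
  have hL : ∀ v, 0 ≤ L v v := fun v => by rw [hLdef, lipForm_self]; positivity
  have hR : ∀ v, 0 ≤ M v v - L v v / 2 := fun v => le_trans (by positivity) (hc v)
  have hMc : ∀ v : X × Y, c * (‖v.1‖ ^ 2 + ‖v.2‖ ^ 2) ≤ M v v := fun v => by
    linarith [hc v, hL v]
  have hcond : ∀ k v, 0 ≤ (1 - 3 * αk k - ε) * M v v - (1 - αk k) ^ 2 / 2 * L v v := by
    intro k v
    obtain ⟨h1, h2, h3⟩ := hε k
    have h := block_nonneg K (sub_nonneg.2 h1) (sub_nonneg.2 h2) h3 v.1 v.2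
    rw [hMdef, hLdef, precond_self, lipForm_self]
    refine h.trans_eq ?_
    ring
  set z : ℕ → X × Y := fun k => (x k, y k) with hz
  have hen : ∀ P, IsSaddle K G Fs gQ gP P →
      (∃ B, ∀ k, M (z k - P) (z k - P) ≤ B) ∧
      Tendsto (fun k => M (z k - z (k - 1)) (z k - z (k - 1))) atTop (𝓝 0) ∧
      ∃ l, Tendsto (fun k => M (z k - P) (z k - P)) atTop (𝓝 l) := fun P hP =>
    inertial_energy M L (precond_symm K τ σ) (lipForm_symm LQ LP) hL hR hα0 hα1 hε0 hαk hαmono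
      hcond z (fun k => (ξ k, ζ k)) (fun k => by simp [hz, hξ, hζ]) P
      (fun k => step_VI hQ hPs hgQ hgP hLQ hLP hQlip hPlip hP _ _ _ _ (hxstep k) (hystep k))
  obtain ⟨p₀, q₀, hs₀⟩ := hsaddle
  obtain ⟨⟨B, hB⟩, hm0, -⟩ := hen (p₀, q₀) hs₀
  -- Strong positivity of `M` turns the estimates in `M` into estimates in norm.
  have hxd : Tendsto (fun k => x k - x (k - 1)) atTop (𝓝 0) :=
    tendsto_zero_of_mul_sq_le hc0 hm0 fun k => by
      refine le_trans ?_ (hMc _)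
      simp only [hz, Prod.mk_sub_mk]
      nlinarith [sq_nonneg ‖y k - y (k - 1)‖]
  have hyd : Tendsto (fun k => y k - y (k - 1)) atTop (𝓝 0) :=
    tendsto_zero_of_mul_sq_le hc0 hm0 fun k => by
      refine le_trans ?_ (hMc _)
      simp only [hz, Prod.mk_sub_mk]
      nlinarith [sq_nonneg ‖x k - x (k - 1)‖]
  obtain ⟨C₁, hC₁⟩ : ∃ C, ∀ k, ‖x k‖ ≤ C := bounded_of_mul_sq_le hc0 (p := p₀) (B := B) fun k => by
    refine le_trans ?_ ((hMc _).trans (hB k))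
    simp only [hz, Prod.mk_sub_mk]
    nlinarith [sq_nonneg ‖y k - q₀‖]
  obtain ⟨C₂, hC₂⟩ : ∃ C, ∀ k, ‖y k‖ ≤ C := bounded_of_mul_sq_le hc0 (p := q₀) (B := B) fun k => by
    refine le_trans ?_ ((hMc _).trans (hB k))
    simp only [hz, Prod.mk_sub_mk]
    nlinarith [sq_nonneg ‖x k - p₀‖]
  have hxd1 : Tendsto (fun k => x (k + 1) - x k) atTop (𝓝 0) := hxd.comp (tendsto_add_atTop_nat 1)
  have hyd1 : Tendsto (fun k => y (k + 1) - y k) atTop (𝓝 0) := hyd.comp (tendsto_add_atTop_nat 1)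
  have hα1' : ∀ k, αk k ∈ Set.Icc (0:ℝ) 1 := fun k => ⟨(hαk k).1, (hαk k).2.trans hα1.le⟩
  have hξx := inertial_sub_tendsto hα1' hξ hxd
  have hζy := inertial_sub_tendsto hα1' hζ hyd
  have hξC := inertial_norm_le hα1' hξ hC₁
  have hζC := inertial_norm_le hα1' hζ hC₂
  have hC₁0 := (norm_nonneg _).trans (hC₁ 0)
  have hC₂0 := (norm_nonneg _).trans (hC₂ 0)
  have hcluster : ∀ U : Ultrafilter ℕ, (U : Filter ℕ) ≤ atTop → ∃ P : X × Y,
      IsSaddle K G Fs gQ gP P ∧ (∀ u, Tendsto (fun k => ⟪x k, u⟫) U (𝓝 ⟪P.1, u⟫)) ∧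
      (∀ v, Tendsto (fun k => ⟪y k, v⟫) U (𝓝 ⟪P.2, v⟫)) := by
    intro U hU
    obtain ⟨p, hp⟩ := exists_weak_limit U hC₁
    obtain ⟨q, hq⟩ := exists_weak_limit U hC₂
    refine ⟨(p, q), ?_, hp, hq⟩
    exact isSaddle_of_weak (C := 3 * C₁ + 3 * C₂) hG hGlsc hFs hFslsc hQ hPs hgQ hgP hQlip hPlip
      hxstep hystep
      (fun k => by linarith [hC₁ (k + 1)]) (fun k => by linarith [hC₂ (k + 1)])
      (fun k => by linarith [hξC k]) (fun k => by linarith [hζC k])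
      (by simpa using (hξx.sub hxd1).mono_left hU) (by simpa using (hζy.sub hyd1).mono_left hU)
      (weak_of_sub_tendsto_zero hp (hxd1.mono_left hU))
      (weak_of_sub_tendsto_zero hq (hyd1.mono_left hU))
  -- Opial's argument: two saddle points that are both weak cluster points coincide.
  have hunique : ∀ U V : Ultrafilter ℕ, (U : Filter ℕ) ≤ atTop → (V : Filter ℕ) ≤ atTop →
      ∀ P Q' : X × Y, IsSaddle K G Fs gQ gP P → IsSaddle K G Fs gQ gP Q' →
      (∀ u, Tendsto (fun k => ⟪x k, u⟫) U (𝓝 ⟪P.1, u⟫)) →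
      (∀ v, Tendsto (fun k => ⟪y k, v⟫) U (𝓝 ⟪P.2, v⟫)) →
      (∀ u, Tendsto (fun k => ⟪x k, u⟫) V (𝓝 ⟪Q'.1, u⟫)) →
      (∀ v, Tendsto (fun k => ⟪y k, v⟫) V (𝓝 ⟪Q'.2, v⟫)) → P = Q' := by
    intro U V hU hV P Q' hP hQ' hx1 hy1 hx2 hy2
    obtain ⟨-, -, l₁, hl₁⟩ := hen P hP
    obtain ⟨-, -, l₂, hl₂⟩ := hen Q' hQ'
    have h1 : Tendsto (fun k => M (z k) (P - Q')) atTop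
        (𝓝 ((M P P - M Q' Q' - (l₁ - l₂)) / 2)) := by
      refine (((hl₁.sub hl₂).const_sub (M P P - M Q' Q')).div_const 2).congr fun k => ?_
      simp only [map_sub, LinearMap.sub_apply]
      rw [hMdef, precond_symm K τ σ P (z k), precond_symm K τ σ Q' (z k)]
      ring
    have h2 := tendsto_nhds_unique (h1.mono_left hU) (precond_weak K τ σ hx1 hy1 (P - Q'))
    have h3 := tendsto_nhds_unique (h1.mono_left hV) (precond_weak K τ σ hx2 hy2 (P - Q'))
    have h4 : M (P - Q') (P - Q') = 0 := by
      rw [map_sub M, LinearMap.sub_apply]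
      linarith
    have h5 := hMc (P - Q')
    rw [h4] at h5
    have h6 : ‖(P - Q').1‖ ^ 2 + ‖(P - Q').2‖ ^ 2 ≤ 0 := by
      by_contra h
      exact absurd h5 (not_le.2 (mul_pos hc0 (not_le.1 h)))
    have h7 : ‖(P - Q').1‖ = 0 := by nlinarith [sq_nonneg ‖(P - Q').1‖, sq_nonneg ‖(P - Q').2‖]
    have h8 : ‖(P - Q').2‖ = 0 := by nlinarith [sq_nonneg ‖(P - Q').1‖, sq_nonneg ‖(P - Q').2‖]
    exact sub_eq_zero.1 (Prod.ext (norm_eq_zero.1 h7) (norm_eq_zero.1 h8))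
  obtain ⟨P, hP, hPx, hPy⟩ := hcluster (Ultrafilter.of atTop) (Ultrafilter.of_le atTop)
  refine ⟨P.1, P.2, hP, fun u => ?_, fun v => ?_⟩
  · rw [tendsto_iff_ultrafilter]
    intro U hU
    obtain ⟨P', hP', h1, h2⟩ := hcluster U hU
    rw [hunique _ U (Ultrafilter.of_le atTop) hU P P' hP hP' hPx hPy h1 h2]
    exact h1 u
  · rw [tendsto_iff_ultrafilter]
    intro U hU
    obtain ⟨P', hP', h1, h2⟩ := hcluster U hU
    rw [hunique _ U (Ultrafilter.of_le atTop) hU P P' hP hP' hPx hPy h1 h2]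
    exact h2 v
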